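/- arXiv:1101.2609 — 4 statements merged into one kernel-verified Lean document; each statement's English description precedes it below -/
import Mathlib

section
/- For every integer n ≥ 0 and every x, the q-Euler polynomials satisfy the reflection symmetry (-1)^n · E_{n,q^{-1}}(x) = q · E_{n,q}(1 - x). -/
/-!
Let `L` be the linear functional on polynomials with `L (X ^ n) = E n`, so that
`E_{n,q}(x) = L ((X + x) ^ n)`. The recurrence for the `q`-Euler numbers says that
`q * L (p (X + 1)) + L p = 2 * p 0` for every polynomial `p`; by induction on the degree, this
equation determines `L` because `q + 1` can be cancelled. If `L'` solves it for `q⁻¹`, then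
substituting `p (-X)` shows that `p ↦ q⁻¹ * L' (p (-X - 1))` solves it for `q`. Hence
`L p = q⁻¹ * L' (p (-X - 1))`, and `p = (X + 1 - x) ^ n` gives the symmetry.
-/

section UmbralCalculus

open Polynomial

variable {R : Type*}

theorem linearMap_ext_X_pow [Semiring R] {M : Type*} [AddCommMonoid M] [Module R M]
    {L L' : R[X] →ₗ[R] M} (h : ∀ n, L (X ^ n) = L' (X ^ n)) : L = L' :=
  (basisMonomials R).ext fun n => by
    simpa only [coe_basisMonomials, monomial_one_right_eq_X_pow] using h n

section CommSemiring

variable [CommSemiring R]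

/-- The umbral functional of a sequence `a`: the linear functional on polynomials that lowers the
exponent of `X ^ n` to the index of `a n`. -/
noncomputable def umbralEval (a : ℕ → R) : R[X] →ₗ[R] R :=
  (basisMonomials R).constr R a

theorem umbralEval_X_pow (a : ℕ → R) (n : ℕ) : umbralEval a (X ^ n) = a n := by
  simpa only [umbralEval, coe_basisMonomials, monomial_one_right_eq_X_pow] using
    (basisMonomials R).constr_basis R a n

theorem linearMap_X_add_C_pow (L : R[X] →ₗ[R] R) (x : R) (n : ℕ) :
    L ((X + C x) ^ n) =
      ∑ l ∈ Finset.range (n + 1), (n.choose l : R) * L (X ^ l) * x ^ (n - l) := by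
  rw [add_pow, map_sum]
  refine Finset.sum_congr rfl fun l _ => ?_
  have hterm : (X ^ l * C x ^ (n - l) * (n.choose l : R[X])) =
      ((n.choose l : R) * x ^ (n - l)) • X ^ l := by
    rw [smul_eq_C_mul, C_mul, C_pow, C_eq_natCast]
    ring
  rw [hterm, map_smul, smul_eq_mul]
  ring

theorem linearMap_X_add_one_pow (L : R[X] →ₗ[R] R) (n : ℕ) :
    L ((X + 1) ^ n) = ∑ l ∈ Finset.range (n + 1), (n.choose l : R) * L (X ^ l) := by
  simpa only [C_1, one_pow, mul_one] using linearMap_X_add_C_pow L 1 n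

/-- `L` is a `q`-Euler functional: its moments `L (X ^ n)` are the `q`-Euler numbers. The functional
equation is the umbral recurrence `q (E + 1) ^ n + E ^ n = 2 * 0 ^ n`, extended linearly from
`X ^ n` to all polynomials. -/
def IsQEulerFunctional (q : R) (L : R[X] →ₗ[R] R) : Prop :=
  ∀ p : R[X], q * L (p.comp (X + 1)) + L p = 2 * p.eval 0

theorem isQEulerFunctional_of_X_pow {q : R} {L : R[X] →ₗ[R] R}
    (h : ∀ n, q * L ((X + 1) ^ n) + L (X ^ n) = 2 * 0 ^ n) : IsQEulerFunctional q L := by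
  have hmaps : q • (L ∘ₗ (aeval (X + 1)).toLinearMap) + L = (2 : R) • leval 0 :=
    linearMap_ext_X_pow fun n => by simpa using h n
  exact LinearMap.congr_fun hmaps

theorem isQEulerFunctional_umbralEval {q : R} {E : ℕ → R} (hE0 : E 0 * (q + 1) = 2)
    (hE : ∀ n, 1 ≤ n →
      q * ∑ l ∈ Finset.range (n + 1), (n.choose l : R) * E l + E n = 0) :
    IsQEulerFunctional q (umbralEval E) := by
  refine isQEulerFunctional_of_X_pow fun n => ?_
  simp only [linearMap_X_add_one_pow, umbralEval_X_pow]
  rcases n.eq_zero_or_pos with rfl | hn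
  · simpa [mul_add, mul_comm q] using hE0
  · rw [hE n hn, zero_pow hn.ne', mul_zero]

end CommSemiring

section CommRing

variable [CommRing R] {q r : R} {L L' : R[X] →ₗ[R] R}

theorem IsQEulerFunctional.unique (hq : IsLeftRegular (q + 1)) (hL : IsQEulerFunctional q L)
    (hL' : IsQEulerFunctional q L') : L = L' := by
  refine linearMap_ext_X_pow fun n => ?_
  induction n using Nat.strong_induction_on with
  | _ n ih =>
    have hlower : ∑ l ∈ Finset.range n, (n.choose l : R) * L (X ^ l) =
        ∑ l ∈ Finset.range n, (n.choose l : R) * L' (X ^ l) :=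
      Finset.sum_congr rfl fun l hl => by rw [ih l (Finset.mem_range.mp hl)]
    have hn := (hL (X ^ n)).trans (hL' (X ^ n)).symm
    simp only [X_pow_comp, linearMap_X_add_one_pow, Finset.sum_range_succ, hlower,
      Nat.choose_self, Nat.cast_one, one_mul] at hn
    refine hq ?_
    linear_combination hn

theorem IsQEulerFunctional.reflect (hqr : q * r = 1) (hL : IsQEulerFunctional r L) :
    IsQEulerFunctional q (r • L ∘ₗ (aeval (-X - 1)).toLinearMap) := by
  intro p
  have hshift : (p.comp (X + 1)).comp (-X - 1) = p.comp (-X) := by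
    simp [comp_assoc]
  have hneg : (p.comp (-X)).comp (X + 1) = p.comp (-X - 1) := by
    rw [comp_assoc, neg_comp, X_comp, neg_add']
  have h := hL (p.comp (-X))
  rw [hneg, eval_comp, eval_neg, eval_X, neg_zero] at h
  simp only [LinearMap.smul_apply, LinearMap.comp_apply, AlgHom.toLinearMap_apply,
    ← comp_eq_aeval, smul_eq_mul, hshift]
  linear_combination h + L (p.comp (-X)) * hqr

theorem IsQEulerFunctional.apply_comp_neg_sub_one (hqr : q * r = 1) (hq : IsLeftRegular (q + 1))
    (hL : IsQEulerFunctional q L) (hL' : IsQEulerFunctional r L') (p : R[X]) :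
    L' (p.comp (-X - 1)) = q * L p := by
  rw [hL.unique hq (hL'.reflect hqr)]
  simp [← comp_eq_aeval, ← mul_assoc, hqr]

end CommRing

end UmbralCalculus

open Polynomial in
theorem qEuler_reflection_general {R : Type*} [CommRing R] {q r : R} (hqr : q * r = 1)
    (hq : IsLeftRegular (q + 1)) {E E' : ℕ → R} (hE0 : E 0 * (q + 1) = 2)
    (hE : ∀ n, 1 ≤ n →
      q * ∑ l ∈ Finset.range (n + 1), (n.choose l : R) * E l + E n = 0)
    (hE'0 : E' 0 * (r + 1) = 2)
    (hE' : ∀ n, 1 ≤ n →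
      r * ∑ l ∈ Finset.range (n + 1), (n.choose l : R) * E' l + E' n = 0)
    (n : ℕ) (x : R) :
    (-1) ^ n * ∑ l ∈ Finset.range (n + 1), (n.choose l : R) * E' l * x ^ (n - l) =
      q * ∑ l ∈ Finset.range (n + 1), (n.choose l : R) * E l * (1 - x) ^ (n - l) := by
  have hreflect := (isQEulerFunctional_umbralEval hE0 hE).apply_comp_neg_sub_one hqr hq
    (isQEulerFunctional_umbralEval hE'0 hE') ((X + C (1 - x)) ^ n)
  have hcomp : ((X + C (1 - x)) ^ n).comp (-X - 1) = (-1 : R) ^ n • (X + C x) ^ n := by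
    have hlinear : (X + C (1 - x)).comp (-X - 1) = (-1 : R) • (X + C x) := by
      simp only [add_comp, sub_comp, one_comp, X_comp, C_comp, C_sub, C_1, neg_smul, one_smul]
      ring
    rw [pow_comp, hlinear, _root_.smul_pow]
  simpa only [hcomp, map_smul, smul_eq_mul, linearMap_X_add_C_pow, umbralEval_X_pow] using hreflect

/-- Reflection symmetry for q-Euler polynomials:
`(-1)^n · E_{n,q⁻¹}(x) = q · E_{n,q}(1 - x)`.

Here `E : ℕ → K` are the q-Euler numbers `E_{n,q}` defined by
`E_0 = 2/(q+1)` and `q·∑_{l=0}^{n} C(n,l)·E_l + E_n = 0` for `n ≥ 1`,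
and `E' : ℕ → K` are the q-Euler numbers for `q⁻¹`.
The q-Euler polynomials are `E_{n,q}(x) = ∑_{l=0}^{n} C(n,l)·E_l·x^{n-l}`. -/
theorem qEuler_reflection {K : Type*} [Field K] [CharZero K]
    (q : K) (hq0 : q ≠ 0) (hq1 : q ≠ -1)
    (E E' : ℕ → K)
    (hE0 : E 0 = 2 / (q + 1))
    (hE : ∀ n : ℕ, 1 ≤ n →
      q * ∑ l ∈ Finset.range (n + 1), (n.choose l : K) * E l + E n = 0)
    (hE'0 : E' 0 = 2 / (q⁻¹ + 1))
    (hE' : ∀ n : ℕ, 1 ≤ n →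
      q⁻¹ * ∑ l ∈ Finset.range (n + 1), (n.choose l : K) * E' l + E' n = 0) :
    ∀ (n : ℕ) (x : K),
      (-1 : K) ^ n * ∑ l ∈ Finset.range (n + 1), (n.choose l : K) * E' l * x ^ (n - l)
        = q * ∑ l ∈ Finset.range (n + 1), (n.choose l : K) * E l * (1 - x) ^ (n - l) := by
  have hq : q + 1 ≠ 0 := fun h => hq1 (eq_neg_of_add_eq_zero_left h)
  have hqr : q * q⁻¹ = 1 := mul_inv_cancel₀ hq0
  have hr : q⁻¹ + 1 ≠ 0 := fun h => hq (by linear_combination q * h - hqr)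
  exact qEuler_reflection_general hqr (IsRegular.of_ne_zero hq).left
    ((eq_div_iff hq).mp hE0) hE ((eq_div_iff hr).mp hE'0) hE'
end

section
/- For every integer n ≥ 1, the q-Euler polynomials satisfy q · E_{n,q}(2) = 2 + q^{-1} · E_{n,q}. -/
/-!
Let `L` be the umbral functional, the linear functional on polynomials with `L (X ^ n) = E n`.
The recurrence says that `q * L (p (X + 1)) + L p = 2 * p 0` for every `p = X ^ n`, hence, both
sides being linear in `p`, for every polynomial `p`. Since `E_n(x) = L ((X + x) ^ n)`, taking
`p = (X + x) ^ n` gives the functional equation `q * E_n(x + 1) + E_n(x) = 2 * x ^ n`. At `x = 1`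
it relates `E_n(2)` to `E_n(1)`, and the recurrence relates `E_n(1)` to `E_n`.
-/

section Umbral

open Polynomial

variable {R : Type*} [CommSemiring R]

/-- The umbral functional of a sequence `E`: the linear functional on polynomials sending `X ^ n` to
`E n`. Its value at `(X + C x) ^ n` is the value at `x` of the `n`-th Appell polynomial of `E`. -/
noncomputable def umbral (E : ℕ → R) : R[X] →ₗ[R] R :=
  (basisMonomials R).constr R E

theorem umbral_X_pow (E : ℕ → R) (n : ℕ) : umbral E (X ^ n) = E n := by
  rw [X_pow_eq_monomial]
  exact (basisMonomials R).constr_basis R E n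

theorem umbral_X_add_C_pow (E : ℕ → R) (x : R) (n : ℕ) :
    umbral E ((X + C x) ^ n) =
      ∑ l ∈ Finset.range (n + 1), (n.choose l : R) * E l * x ^ (n - l) := by
  rw [add_pow, map_sum]
  refine Finset.sum_congr rfl fun l _ => ?_
  have hterm : (X : R[X]) ^ l * C x ^ (n - l) * (n.choose l : R[X]) =
      ((n.choose l : R) * x ^ (n - l)) • X ^ l := by
    rw [smul_eq_C_mul, C_mul, C_pow, map_natCast]
    ring
  rw [hterm, map_smul, umbral_X_pow, smul_eq_mul, mul_right_comm]

theorem umbral_X_add_C_one_pow (E : ℕ → R) (n : ℕ) :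
    umbral E ((X + C 1) ^ n) = ∑ l ∈ Finset.range (n + 1), (n.choose l : R) * E l := by
  simp only [umbral_X_add_C_pow, one_pow, mul_one]

theorem mul_umbral_taylor_add_umbral {E : ℕ → R} {q a c : R}
    (h : ∀ n, q * umbral E ((X + C a) ^ n) + E n = c * 0 ^ n) (p : R[X]) :
    q * umbral E (taylor a p) + umbral E p = c * p.eval 0 := by
  have hlin : q • umbral E ∘ₗ taylor a + umbral E = c • leval 0 :=
    (basisMonomials R).ext fun n => by
      simpa [← X_pow_eq_monomial, umbral_X_pow] using h n
  exact LinearMap.congr_fun hlin p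

/-- `E` is the sequence of `q`-Euler numbers. The initial value `E 0 = 2 / (q + 1)` is stated
without division, so that the notion makes sense over any commutative semiring. -/
structure IsQEuler (q : R) (E : ℕ → R) : Prop where
  zero : (q + 1) * E 0 = 2
  recurrence : ∀ n, 1 ≤ n →
    q * ∑ l ∈ Finset.range (n + 1), (n.choose l : R) * E l + E n = 0

namespace IsQEuler

variable {q : R} {E : ℕ → R}

theorem mul_umbral_X_add_C_one_pow_add (hE : IsQEuler q E) (n : ℕ) :
    q * umbral E ((X + C 1) ^ n) + E n = 2 * 0 ^ n := by
  rcases Nat.eq_zero_or_pos n with rfl | hn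
  · rw [umbral_X_add_C_one_pow]
    simpa [add_mul] using hE.zero
  · rw [umbral_X_add_C_one_pow, hE.recurrence n hn, zero_pow hn.ne', mul_zero]

theorem mul_umbral_X_add_C_add_one_pow_add (hE : IsQEuler q E) (x : R) (n : ℕ) :
    q * umbral E ((X + C (x + 1)) ^ n) + umbral E ((X + C x) ^ n) = 2 * x ^ n := by
  have hshift : taylor 1 ((X + C x) ^ n) = (X + C (x + 1)) ^ n := by
    rw [taylor_apply, pow_comp, add_comp, X_comp, C_comp, C_add, add_assoc, add_comm (C 1)]
  have heval : ((X + C x) ^ n).eval 0 = x ^ n := by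
    rw [eval_pow, eval_add, eval_X, eval_C, zero_add]
  rw [← hshift, ← heval]
  exact mul_umbral_taylor_add_umbral hE.mul_umbral_X_add_C_one_pow_add _

end IsQEuler

theorem qEuler_at_two_general {q : R} {E : ℕ → R} (hE : IsQEuler q E) {n : ℕ} (hn : 1 ≤ n) :
    q ^ 2 * ∑ l ∈ Finset.range (n + 1), (n.choose l : R) * E l * 2 ^ (n - l) = 2 * q + E n := by
  have htwo : q * umbral E ((X + C 2) ^ n) + umbral E ((X + C 1) ^ n) = 2 := by
    simpa only [one_add_one_eq_two, one_pow, mul_one] using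
      hE.mul_umbral_X_add_C_add_one_pow_add 1 n
  have hone : q * umbral E ((X + C 1) ^ n) + E n = 0 := by
    rw [umbral_X_add_C_one_pow, hE.recurrence n hn]
  rw [← umbral_X_add_C_pow]
  calc q ^ 2 * umbral E ((X + C 2) ^ n)
      = q ^ 2 * umbral E ((X + C 2) ^ n) + (q * umbral E ((X + C 1) ^ n) + E n) := by
        rw [hone, add_zero]
    _ = q * (q * umbral E ((X + C 2) ^ n) + umbral E ((X + C 1) ^ n)) + E n := by ring
    _ = 2 * q + E n := by rw [htwo, mul_comm]

end Umbral

/-- `q · E_{n,q}(2) = 2 + q⁻¹ · E_{n,q}` for `n ≥ 1`, where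
`E : ℕ → K` are the q-Euler numbers `E_{n,q}` defined by
`E_0 = 2/(q+1)` and `q·∑_{l=0}^{n} C(n,l)·E_l + E_n = 0` for `n ≥ 1`,
and `E_{n,q}(x) = ∑_{l=0}^{n} C(n,l)·E_l·x^{n-l}`. -/
theorem qEuler_at_two {K : Type*} [Field K] [CharZero K]
    (q : K) (hq0 : q ≠ 0) (hq1 : q ≠ -1)
    (E : ℕ → K)
    (hE0 : E 0 = 2 / (q + 1))
    (hE : ∀ n : ℕ, 1 ≤ n →
      q * ∑ l ∈ Finset.range (n + 1), (n.choose l : K) * E l + E n = 0) :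
    ∀ n : ℕ, 1 ≤ n →
      q * ∑ l ∈ Finset.range (n + 1), (n.choose l : K) * E l * (2 : K) ^ (n - l)
        = 2 + q⁻¹ * E n := by
  intro n hn
  have hq : q + 1 ≠ 0 := mt eq_neg_of_add_eq_zero_left hq1
  have hEuler : IsQEuler q E := ⟨by rw [hE0, mul_div_cancel₀ _ hq], hE⟩
  have := qEuler_at_two_general hEuler hn
  field_simp
  linear_combination this
end

section
/- For every integer n ≥ 1, one has (-1)^n · E_{n,q^{-1}}(-1) = 2 + q^{-1} · E_{n,q}. (This is the content of Theorem 3 of the paper, expressing the p-adic integral ∫_{ℤ_p} q^{-x}(1-x)^n dμ_{-1}(x) in terms of q-Euler numbers via Witt's formula.) -/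
/-!
The polynomial `E_{n,q}(x)` is the unique solution of the difference equation
`q P(x + 1) + P(x) = 2 xⁿ`: a solution of the homogeneous equation has leading coefficient
annihilated by `q + 1`, hence zero. Both `q E_{n,q}(x + 1)` and `(-1)ⁿ E_{n,q⁻¹}(-x)` solve
`q P(x + 1) + P(x) = 2 q (x + 1)ⁿ`, so they coincide. Putting `x = 1`, the difference equation and
the recurrence give `(-1)ⁿ E_{n,q⁻¹}(-1) = q E_{n,q}(2) = 2 - E_{n,q}(1) = 2 + q⁻¹ E_{n,q}`.
-/

open Polynomial
open scoped nonZeroDivisors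

section Appell

variable {R : Type*} [CommSemiring R]

/-- The `n`-th Appell polynomial `∑ l, C(n, l) aₗ xⁿ⁻ˡ` of a sequence `a`, umbrally `(a + x)ⁿ`.
For the `q`-Euler numbers this is the `q`-Euler polynomial `E_{n,q}(x)`. -/
noncomputable def appellPolynomial (a : ℕ → R) (n : ℕ) : R[X] :=
  ∑ l ∈ Finset.range (n + 1), monomial (n - l) (n.choose l * a l)

theorem eval_appellPolynomial (a : ℕ → R) (n : ℕ) (x : R) :
    (appellPolynomial a n).eval x =
      ∑ l ∈ Finset.range (n + 1), (n.choose l : R) * a l * x ^ (n - l) := by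
  simp only [appellPolynomial, eval_finsetSum, eval_monomial]

theorem coeff_appellPolynomial (a : ℕ → R) (n k : ℕ) :
    (appellPolynomial a n).coeff k = n.choose k * a (n - k) := by
  simp only [appellPolynomial, finsetSum_coeff, coeff_monomial]
  rcases le_or_gt k n with hk | hk
  · rw [Finset.sum_eq_single_of_mem (n - k) (Finset.mem_range.mpr (by omega))
      fun l hl hlk => if_neg (by have := Finset.mem_range.mp hl; omega)]
    rw [if_pos (Nat.sub_sub_self hk), Nat.choose_symm hk]
  · rw [Nat.choose_eq_zero_of_lt hk, Nat.cast_zero, zero_mul]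
    exact Finset.sum_eq_zero fun l _ => if_neg (by omega)

theorem hasseDeriv_appellPolynomial (a : ℕ → R) (n k : ℕ) :
    hasseDeriv k (appellPolynomial a n) = n.choose k • appellPolynomial a (n - k) := by
  ext m
  have hchoose : (m + k).choose k * n.choose (m + k) = n.choose k * (n - k).choose m := by
    rw [mul_comm, Nat.choose_mul (Nat.le_add_left k m), Nat.add_sub_cancel]
  rw [hasseDeriv_coeff, coeff_smul, coeff_appellPolynomial, coeff_appellPolynomial,
    nsmul_eq_mul, ← mul_assoc, ← mul_assoc, ← Nat.cast_mul, ← Nat.cast_mul, hchoose,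
    Nat.sub_sub, Nat.add_comm m k]

theorem coeff_taylor_appellPolynomial (a : ℕ → R) (n k : ℕ) (r : R) :
    (taylor r (appellPolynomial a n)).coeff k =
      n.choose k * (appellPolynomial a (n - k)).eval r := by
  rw [taylor_coeff, hasseDeriv_appellPolynomial, eval_smul, nsmul_eq_mul]

end Appell

/-- `E` is a sequence of `q`-Euler numbers. The initial value `2 / (q + 1)` is stated without
division, and the umbral power `(E + 1)ⁿ` is the value at `1` of the Appell polynomial of `E`. -/
structure IsQEulerSequence {R : Type*} [CommSemiring R] (q : R) (E : ℕ → R) : Prop where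
  add_one_mul_zero : (q + 1) * E 0 = 2
  recurrence : ∀ n, 1 ≤ n → q * (appellPolynomial E n).eval 1 + E n = 0

theorem isQEulerSequence_of_eq_div {K : Type*} [Field K] {q : K} (hq : q ≠ -1) {E : ℕ → K}
    (hE0 : E 0 = 2 / (q + 1))
    (hE : ∀ n : ℕ, 1 ≤ n →
      q * ∑ l ∈ Finset.range (n + 1), (n.choose l : K) * E l + E n = 0) :
    IsQEulerSequence q E where
  add_one_mul_zero := by
    rw [hE0, mul_div_cancel₀ _ (mt eq_neg_of_add_eq_zero_left hq)]
  recurrence n hn := by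
    simpa only [eval_appellPolynomial, one_pow, mul_one] using hE n hn

theorem IsQEulerSequence.C_mul_taylor_add {R : Type*} [CommSemiring R] {q : R} {E : ℕ → R}
    (hE : IsQEulerSequence q E) (n : ℕ) :
    C q * taylor 1 (appellPolynomial E n) + appellPolynomial E n = C 2 * X ^ n := by
  ext k
  have hcoeff : (C q * taylor 1 (appellPolynomial E n) + appellPolynomial E n).coeff k =
      n.choose k * (q * (appellPolynomial E (n - k)).eval 1 + E (n - k)) := by
    rw [coeff_add, coeff_C_mul, coeff_taylor_appellPolynomial, coeff_appellPolynomial]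
    ring
  rw [hcoeff, coeff_C_mul_X_pow]
  rcases lt_trichotomy k n with hk | rfl | hk
  · rw [hE.recurrence (n - k) (Nat.sub_pos_of_lt hk), mul_zero, if_neg hk.ne]
  · simp [eval_appellPolynomial, ← hE.add_one_mul_zero, add_mul]
  · rw [Nat.choose_eq_zero_of_lt hk, Nat.cast_zero, zero_mul, if_neg hk.ne']

section Ring

variable {R : Type*} [CommRing R]

theorem injective_C_mul_taylor_add {q : R} (hq : q + 1 ∈ R⁰) (r : R) :
    Function.Injective fun p : R[X] => C q * taylor r p + p := by
  intro p₁ p₂ h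
  have hsub : C q * taylor r (p₁ - p₂) + (p₁ - p₂) = 0 := by
    rw [map_sub]
    linear_combination h
  have hlead : (q + 1) * (p₁ - p₂).leadingCoeff = 0 := by
    have hcoeff := congrArg (coeff · (p₁ - p₂).natDegree) hsub
    simpa only [coeff_add, coeff_C_mul, coeff_taylor_natDegree, coeff_natDegree, coeff_zero,
      add_one_mul] using hcoeff
  rw [mul_left_mem_nonZeroDivisors_eq_zero_iff hq, leadingCoeff_eq_zero] at hlead
  exact sub_eq_zero.mp hlead

theorem IsQEulerSequence.neg_one_pow_mul_comp_neg_X {q q' : R} (hqq' : q * q' = 1)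
    (hq : q + 1 ∈ R⁰) {E E' : ℕ → R}
    (hE : IsQEulerSequence q E) (hE' : IsQEulerSequence q' E') (n : ℕ) :
    (-1) ^ n * (appellPolynomial E' n).comp (-X) = C q * taylor 1 (appellPolynomial E n) := by
  set P := appellPolynomial E n
  set Q := appellPolynomial E' n
  have hC : C q * C q' = 1 := by rw [← C_mul, hqq', C_1]
  have hsign : (-1) ^ n * (-(X + 1)) ^ n = (X + 1 : R[X]) ^ n := by
    rw [← mul_pow, neg_one_mul, neg_neg]
  have hshift : taylor 1 (Q.comp (-X)) = Q.comp (-(X + 1)) := by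
    rw [taylor_apply, comp_assoc, neg_comp, X_comp, C_1]
  have hQ : C q' * Q.comp (-X) + taylor 1 (Q.comp (-X)) = C 2 * (-(X + 1)) ^ n := by
    have h := congrArg (fun p : R[X] => p.comp (-(X + 1))) (hE'.C_mul_taylor_add n)
    simp only [taylor_apply, add_comp, mul_comp, C_comp, comp_assoc, X_comp, pow_comp, C_1,
      one_comp] at h
    rwa [neg_add, neg_add_cancel_right, ← neg_add, ← hshift] at h
  have hneg : taylor 1 ((-1) ^ n : R[X]) = (-1) ^ n := by
    rw [taylor_pow, map_neg, taylor_one, C_1]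
  have hleft : C q * taylor 1 ((-1) ^ n * Q.comp (-X)) + (-1) ^ n * Q.comp (-X) =
      C q * (C 2 * (X + 1) ^ n) := by
    rw [taylor_mul, hneg]
    linear_combination C q * (-1) ^ n * hQ - (-1) ^ n * Q.comp (-X) * hC + C q * C 2 * hsign
  have hright : C q * taylor 1 (C q * taylor 1 P) + C q * taylor 1 P =
      C q * (C 2 * (X + 1) ^ n) := by
    have h := congrArg (taylor 1) (hE.C_mul_taylor_add n)
    simp only [map_add, taylor_mul, taylor_C, taylor_X_pow, C_1] at h
    rw [taylor_mul, taylor_C, ← mul_add, h]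
  exact injective_C_mul_taylor_add hq 1 (hleft.trans hright.symm)

theorem qEuler_integral_identity_general {q q' : R} (hqq' : q * q' = 1) (hq : q + 1 ∈ R⁰)
    {E E' : ℕ → R} (hE : IsQEulerSequence q E) (hE' : IsQEulerSequence q' E') (n : ℕ) (hn : 1 ≤ n) :
    (-1) ^ n * (appellPolynomial E' n).eval (-1) = 2 + q' * E n := by
  have hreflection : (-1) ^ n * (appellPolynomial E' n).eval (-1) =
      q * (appellPolynomial E n).eval 2 := by
    simpa [taylor_eval, one_add_one_eq_two] using
      congrArg (eval 1) (hE.neg_one_pow_mul_comp_neg_X hqq' hq hE' n)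
  have hat_one : q * (appellPolynomial E n).eval 2 + (appellPolynomial E n).eval 1 = 2 := by
    simpa [taylor_eval, one_add_one_eq_two] using congrArg (eval 1) (hE.C_mul_taylor_add n)
  linear_combination hreflection + hat_one - q' * hE.recurrence n hn +
    (appellPolynomial E n).eval 1 * hqq'

end Ring

/-- `(-1)^n · E_{n,q⁻¹}(-1) = 2 + q⁻¹ · E_{n,q}` for `n ≥ 1` (Theorem 3 of the paper).
`E : ℕ → K` are the q-Euler numbers for `q`, `E' : ℕ → K` those for `q⁻¹`,
and `E_{n,q}(x) = ∑_{l=0}^{n} C(n,l)·E_l·x^{n-l}`. -/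
theorem qEuler_integral_identity {K : Type*} [Field K] [CharZero K]
    (q : K) (hq0 : q ≠ 0) (hq1 : q ≠ -1)
    (E E' : ℕ → K)
    (hE0 : E 0 = 2 / (q + 1))
    (hE : ∀ n : ℕ, 1 ≤ n →
      q * ∑ l ∈ Finset.range (n + 1), (n.choose l : K) * E l + E n = 0)
    (hE'0 : E' 0 = 2 / (q⁻¹ + 1))
    (hE' : ∀ n : ℕ, 1 ≤ n →
      q⁻¹ * ∑ l ∈ Finset.range (n + 1), (n.choose l : K) * E' l + E' n = 0) :
    ∀ n : ℕ, 1 ≤ n →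
      (-1 : K) ^ n *
        ∑ l ∈ Finset.range (n + 1), (n.choose l : K) * E' l * (-1 : K) ^ (n - l)
        = 2 + q⁻¹ * E n := by
  have hq_inv : q⁻¹ ≠ -1 := by simpa [inv_eq_iff_eq_inv] using hq1
  have hq_add : q + 1 ∈ K⁰ := mem_nonZeroDivisors_of_ne_zero (mt eq_neg_of_add_eq_zero_left hq1)
  simpa only [eval_appellPolynomial] using
    qEuler_integral_identity_general (mul_inv_cancel₀ hq0) hq_add
      (isQEulerSequence_of_eq_div hq1 hE0 hE) (isQEulerSequence_of_eq_div hq_inv hE'0 hE')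
end

section
/- Let s ≥ 1 and let n_1, n_2, …, n_s, k be nonnegative integers with k > 0 and n_1 + n_2 + ⋯ + n_s > s·k, and set N = n_1 + n_2 + ⋯ + n_s. Then ∑_{j=0}^{N - sk} C(N - sk, j) · (-1)^j · E_{j+sk, q^{-1}} = q^{-1} · ∑_{j=0}^{sk} C(sk, j) · (-1)^{sk+j} · E_{N-j, q}. (Corollary 9 of the paper, k > 0 case, obtained by comparing two p-adic integral evaluations of the product of Bernstein polynomials ∏_{i=1}^{s} B_{k,n_i}(x) weighted by q^{-x}.) -/
/-!
Let `U` be the linear functional `X ^ n ↦ E_{n,q}`. The umbral recurrence says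
`q U(f(X + 1)) + U(f) = 2 f(0)` for all polynomials `f`, and it determines `U` when `q + 1` is
regular. Applied to `f(-X)`, it shows that `f ↦ q U(f(-X - 1))` satisfies the recurrence for
`q⁻¹`, so this is the functional of the numbers `E_{n,q⁻¹}`. Shifting twice turns it into the
reflection formula for `x ↦ 1 - x`, whose boundary terms vanish on `f = X ^ n (1 - X) ^ m` with
`m, n > 0`; the two sides of the identity are the expansions of `f(1 - X)` and `f` in powers
of `X`.
-/

section

open Polynomial Finset

section CommSemiring

variable {R : Type*} [CommSemiring R]

/-- The sequence `E` satisfies the umbral recurrence `q (E + 1) ^ n + E_n = 2 δ_{n,0}` defining the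
`q`-Euler numbers. The case `n = 0` is the division-free form `(q + 1) E_0 = 2` of the initial
value. -/
def IsQEulerSeq (q : R) (E : ℕ → R) : Prop :=
  ∀ n, q * ∑ l ∈ range (n + 1), (n.choose l : R) * E l + E n = if n = 0 then 2 else 0

/-- Umbral evaluation with respect to `a`: the linear functional on polynomials with moments
`X ^ n ↦ a n`. -/
noncomputable def umbralMap (a : ℕ → R) : R[X] →ₗ[R] R :=
  (basisMonomials R).constr R a

@[simp]
lemma umbralMap_X_pow (a : ℕ → R) (n : ℕ) : umbralMap a (X ^ n) = a n := by
  simpa [umbralMap, X_pow_eq_monomial] using (basisMonomials R).constr_basis R a n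

end CommSemiring

lemma sum_choose_mul_map_pow {A B F : Type*} [Semiring A] [Semiring B] [FunLike F A B]
    [AddMonoidHomClass F A B] (L : F) (p : A) (n : ℕ) :
    ∑ l ∈ range (n + 1), (n.choose l : B) * L (p ^ l) = L ((p + 1) ^ n) := by
  simp only [(Commute.one_right p).add_pow, one_pow, mul_one, map_sum]
  refine sum_congr rfl fun l _ => ?_
  rw [← nsmul_eq_mul, ← map_nsmul, nsmul_eq_mul']

section CommRing

variable {R : Type*} [CommRing R]

lemma umbralMap_X_pow_mul_one_sub_X_pow (a : ℕ → R) (m n : ℕ) :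
    umbralMap a (X ^ m * (1 - X) ^ n) =
      ∑ j ∈ range (n + 1), (n.choose j : R) * (-1) ^ j * a (j + m) := by
  rw [sub_eq_neg_add, add_pow, mul_sum, map_sum]
  refine sum_congr rfl fun j _ => ?_
  have hterm : (X ^ m * ((-X) ^ j * 1 ^ (n - j) * (n.choose j : R[X])) : R[X]) =
      ((n.choose j : R) * (-1) ^ j) • X ^ (j + m) := by
    simp only [smul_eq_C_mul, C_mul, C_pow, C_neg, C_1, map_natCast, one_pow, neg_pow (X : R[X])]
    ring
  rw [hterm, map_smul, umbralMap_X_pow, smul_eq_mul]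

lemma umbralMap_X_pow_mul_one_sub_X_pow_reflect (a : ℕ → R) (m n : ℕ) :
    umbralMap a (X ^ n * (1 - X) ^ m) =
      ∑ j ∈ range (m + 1), (m.choose j : R) * (-1) ^ (m + j) * a (m + n - j) := by
  rw [umbralMap_X_pow_mul_one_sub_X_pow, ← sum_range_reflect]
  refine sum_congr rfl fun j hj => ?_
  have hjm : j ≤ m := mem_range_succ_iff.mp hj
  have hsign : (-1 : R) ^ (m - j) = (-1) ^ (m + j) := neg_one_pow_congr (by grind)
  rw [Nat.add_sub_cancel, Nat.choose_symm hjm, hsign, Nat.sub_add_comm hjm]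

namespace IsQEulerSeq

variable {q q' : R} {E E' : ℕ → R}

lemma unique (hq : IsRegular (q + 1)) (hE : IsQEulerSeq q E) (hE' : IsQEulerSeq q E') : E = E' := by
  funext n
  induction n using Nat.strong_induction_on with
  | _ n ih =>
    have hn := (hE n).trans (hE' n).symm
    have hlow : ∑ l ∈ range n, (n.choose l : R) * E l = ∑ l ∈ range n, (n.choose l : R) * E' l :=
      sum_congr rfl fun l hl => by rw [ih l (mem_range.mp hl)]
    simp only [sum_range_succ, Nat.choose_self, Nat.cast_one, one_mul, hlow] at hn
    exact hq.left (by linear_combination hn)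

lemma umbralMap_comp_X_add_one (hE : IsQEulerSeq q E) (f : R[X]) :
    q * umbralMap E (f.comp (X + 1)) + umbralMap E f = 2 * f.eval 0 := by
  induction f using Polynomial.induction_on' with
  | add f g hf hg =>
    simp only [add_comp, map_add, eval_add]
    linear_combination hf + hg
  | monomial n c =>
    have hn := hE n
    simp only [← umbralMap_X_pow E, sum_choose_mul_map_pow] at hn
    simp only [← C_mul_X_pow_eq_monomial, ← smul_eq_C_mul, smul_comp, X_pow_comp, map_smul,
      eval_smul, eval_pow, eval_X, smul_eq_mul, zero_pow_eq]
    split_ifs at hn ⊢ <;> linear_combination c * hn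

lemma mul_umbralMap_neg_X_sub_one_pow (hqq' : q * q' = 1) (hE : IsQEulerSeq q E) :
    IsQEulerSeq q' fun n => q * umbralMap E ((-X - 1) ^ n) := by
  intro n
  have hshift := hE.umbralMap_comp_X_add_one ((-X) ^ n)
  simp only [pow_comp, neg_comp, X_comp, eval_pow, eval_neg, eval_X, neg_zero, zero_pow_eq,
    neg_add'] at hshift
  simp only [mul_left_comm _ q, ← mul_sum, sum_choose_mul_map_pow, sub_add_cancel]
  split_ifs at hshift ⊢ <;>
    linear_combination hshift + umbralMap E ((-X) ^ n) * hqq'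

lemma umbralMap_eq_mul_umbralMap_comp (hq : IsRegular (q + 1)) (hqq' : q * q' = 1)
    (hE : IsQEulerSeq q E) (hE' : IsQEulerSeq q' E') (f : R[X]) :
    umbralMap E' f = q * umbralMap E (f.comp (-X - 1)) := by
  have hq' : IsRegular (q' + 1) := by
    have hunit : IsUnit q' := .of_mul_eq_one_right q hqq'
    rw [show q' + 1 = q' * (q + 1) by linear_combination -hqq']
    exact hunit.isRegular.mul hq
  obtain rfl := hE'.unique hq' (hE.mul_umbralMap_neg_X_sub_one_pow hqq')
  induction f using Polynomial.induction_on' with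
  | add f g hf hg => simp only [add_comp, map_add, hf, hg, mul_add]
  | monomial n c =>
    simp only [← C_mul_X_pow_eq_monomial, ← smul_eq_C_mul, smul_comp, X_pow_comp, map_smul,
      umbralMap_X_pow, smul_eq_mul, mul_left_comm c]

lemma umbralMap_comp_one_sub_X (hq : IsRegular (q + 1)) (hqq' : q * q' = 1)
    (hE : IsQEulerSeq q E) (hE' : IsQEulerSeq q' E') (f : R[X]) :
    umbralMap E' (f.comp (1 - X)) =
      q' * (umbralMap E f - 2 * f.eval 0) + 2 * f.eval 1 := by
  have hinv := umbralMap_eq_mul_umbralMap_comp hq hqq' hE hE' (f.comp (1 - X))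
  have hshift := hE.umbralMap_comp_X_add_one f
  have hshift_comp := hE.umbralMap_comp_X_add_one (f.comp (X + 1))
  have hcomp : (f.comp (1 - X)).comp (-X - 1) = (f.comp (X + 1)).comp (X + 1) := by
    simp only [comp_assoc, sub_comp, add_comp, one_comp, X_comp]
    ring_nf
  simp only [eval_comp, eval_add, eval_X, eval_one, zero_add] at hshift_comp
  rw [hcomp] at hinv
  linear_combination hinv + hshift_comp - q' * hshift + umbralMap E (f.comp (X + 1)) * hqq'

end IsQEulerSeq

lemma isQEulerSeq_of_eq_div {K : Type*} [Field K] {q : K} (hq : q ≠ -1) {E : ℕ → K}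
    (hE0 : E 0 = 2 / (q + 1))
    (hE : ∀ n : ℕ, 1 ≤ n → q * ∑ l ∈ range (n + 1), (n.choose l : K) * E l + E n = 0) :
    IsQEulerSeq q E := by
  intro n
  rcases n.eq_zero_or_pos with rfl | hn
  · have hq' : q + 1 ≠ 0 := mt eq_neg_of_add_eq_zero_left hq
    simp only [zero_add, sum_range_one, Nat.choose_self, Nat.cast_one, one_mul, hE0, if_true]
    field_simp
  · rw [if_neg hn.ne', hE n hn]

theorem qEuler_bernstein_multiproduct_kpos_general {q q' : R} (hq : IsRegular (q + 1))
    (hqq' : q * q' = 1) {E E' : ℕ → R} (hE : IsQEulerSeq q E) (hE' : IsQEulerSeq q' E')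
    {m N : ℕ} (hm : 0 < m) (hmN : m < N) :
    ∑ j ∈ range (N - m + 1), ((N - m).choose j : R) * (-1) ^ j * E' (j + m) =
      q' * ∑ j ∈ range (m + 1), (m.choose j : R) * (-1) ^ (m + j) * E (N - j) := by
  obtain ⟨n, rfl⟩ := Nat.exists_eq_add_of_le hmN.le
  have hn : n ≠ 0 := by lia
  have hreflect := hE.umbralMap_comp_one_sub_X hq hqq' hE' (X ^ n * (1 - X) ^ m)
  have hcomp : (X ^ n * (1 - X) ^ m : R[X]).comp (1 - X) = X ^ m * (1 - X) ^ n := by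
    simp [mul_comm]
  rw [hcomp, umbralMap_X_pow_mul_one_sub_X_pow, umbralMap_X_pow_mul_one_sub_X_pow_reflect]
    at hreflect
  simpa [hm.ne', hn] using hreflect

end CommRing

end

/-- Corollary 9 (k > 0 case): for `s ≥ 1`, nonnegative `n_1, …, n_s`, `k > 0` with
`N = n_1 + ⋯ + n_s > s·k`,
`∑_{j=0}^{N-sk} C(N-sk,j)·(-1)^j·E_{j+sk,q⁻¹}
  = q⁻¹·∑_{j=0}^{sk} C(sk,j)·(-1)^{sk+j}·E_{N-j,q}`.
`E : ℕ → K` are the q-Euler numbers for `q`, `E' : ℕ → K` those for `q⁻¹`. -/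
theorem qEuler_bernstein_multiproduct_kpos {K : Type*} [Field K] [CharZero K]
    (q : K) (hq0 : q ≠ 0) (hq1 : q ≠ -1)
    (E E' : ℕ → K)
    (hE0 : E 0 = 2 / (q + 1))
    (hE : ∀ n : ℕ, 1 ≤ n →
      q * ∑ l ∈ Finset.range (n + 1), (n.choose l : K) * E l + E n = 0)
    (hE'0 : E' 0 = 2 / (q⁻¹ + 1))
    (hE' : ∀ n : ℕ, 1 ≤ n →
      q⁻¹ * ∑ l ∈ Finset.range (n + 1), (n.choose l : K) * E' l + E' n = 0) :
    ∀ (s : ℕ), 1 ≤ s → ∀ (n : Fin s → ℕ) (k : ℕ), 0 < k →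
      s * k < ∑ i, n i →
      ∑ j ∈ Finset.range ((∑ i, n i) - s * k + 1),
          (((∑ i, n i) - s * k).choose j : K) * (-1 : K) ^ j * E' (j + s * k)
        = q⁻¹ * ∑ j ∈ Finset.range (s * k + 1),
            ((s * k).choose j : K) * (-1 : K) ^ (s * k + j) * E ((∑ i, n i) - j) := by
  intro s hs n k hk hlt
  have hq : q + 1 ≠ 0 := mt eq_neg_of_add_eq_zero_left hq1
  have hq1' : q⁻¹ ≠ -1 := fun h => hq1 (by rw [← inv_inv q, h, inv_neg_one])
  exact qEuler_bernstein_multiproduct_kpos_general (.of_ne_zero hq) (mul_inv_cancel₀ hq0)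
    (isQEulerSeq_of_eq_div hq1 hE0 hE) (isQEulerSeq_of_eq_div hq1' hE'0 hE')
    (Nat.mul_pos hs hk) hlt
end
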